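/- Let M be a projective left R-module such that every submodule of M is M-generated, and assume M is strongly harmonic and Λ^{fi}(M) is compact. Then the map N ↦ m(N) = {𝓜 ∈ mx^fi(M) : N ⊄ 𝓜} is an order isomorphism from the poset (Ψ(M), ⊆) onto the frame of open subsets of the space mx^fi(M); in particular Ψ(M) ≅ 𝒪(mx^fi(M)) as frames. -/

import Mathlib

/-!
The annihilator `Ann_M(K)` is the set of points killed by every `f : M → K`; it is always fully
invariant. Since submodules are `M`-generated, `B = M · B`, and products distribute over sums on
the left, so for `K, A, B` fully invariant `K + A = K + B = M` forces `K + (A ∩ B) = M`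
(`sup_inf_eq_top`). In particular maximal fully invariant submodules are prime for intersections,
and every open set of `mx^fi(M)` has the form `m(K)`. By compactness every proper fully invariant
submodule lies in a maximal one.

*Order embedding.* Let `N, L ∈ Ψ(M)` with `m(N) ⊆ m(L)` and `n ∈ N`. No maximal fully invariant
submodule contains `L + Ann_M(Rn)`, as it would contain `N + Ann_M(Rn) = M`; so this sum is `M`,
and `Rn = M · Rn = L · Rn ≤ L` (`mem_of_sup_annM`).

*Surjectivity.* For `K` fully invariant put `psiCore K = {n : K + Ann_M(Rn) = M}`. Projectivity of
`M` shows that this is a fully invariant submodule, because maps into `Rn + Rn'` split into a map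
into `Rn` plus a map into `Rn'`, and maps into `g(Rn)` lift to maps into `Rn`. It is contained
in `K`. Given a maximal `𝓜` not containing `K`, strong harmonicity separates `𝓜` from each
maximal `𝓛 ⊇ K`, and compactness turns this into a single fully invariant `A ⊄ 𝓜` with
`K + Ann_M(A) = M`, so that `A ≤ psiCore K` and `psiCore K ⊄ 𝓜` (`not_psiCore_le`). Hence
`m(psiCore K) = m(K)`, from which `psiCore K ∈ Ψ(M)` follows.
-/

open Submodule

variable {R : Type*} [Ring R] {M : Type*} [AddCommGroup M] [Module R M]

/-- The product `N ·_M L = Σ { f(N) : f ∈ Hom_R(M, L) }` of submodules of `M`. -/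
def SmProd (N L : Submodule R M) : Submodule R M :=
  ⨆ f : M →ₗ[R] L, N.map (L.subtype ∘ₗ f)

/-- A submodule is fully invariant if it is stable under every endomorphism of `M`. -/
def IsFI (N : Submodule R M) : Prop :=
  ∀ f : M →ₗ[R] M, N.map f ≤ N

/-- `N` is a maximal proper fully invariant submodule of `M`
(a coatom of the lattice of fully invariant submodules). -/
def IsMaxFI (N : Submodule R M) : Prop :=
  IsFI N ∧ N ≠ ⊤ ∧ ∀ L : Submodule R M, IsFI L → N < L → L = ⊤

/-- `M` is strongly harmonic if for every pair of distinct maximal proper fully invariant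
submodules `N, L` there are fully invariant `N', L'` with `N' ⊄ N`, `L' ⊄ L`, `L' ·_M N' = 0`. -/
def StronglyHarmonic (R M : Type*) [Ring R] [AddCommGroup M] [Module R M] : Prop :=
  ∀ N L : Submodule R M, IsMaxFI N → IsMaxFI L → N ≠ L →
    ∃ N' L' : Submodule R M, IsFI N' ∧ IsFI L' ∧ ¬ N' ≤ N ∧ ¬ L' ≤ L ∧ SmProd L' N' = ⊥

/-- `Ann_M(K) = Σ { L ≤ M : L ·_M K = 0 }`. -/
def AnnM (K : Submodule R M) : Submodule R M :=
  sSup {L : Submodule R M | SmProd L K = ⊥}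

/-- `Ler(N) = Σ { K fully invariant : N + Ann_M(K) = M }`. -/
def Ler (N : Submodule R M) : Submodule R M :=
  sSup {K : Submodule R M | IsFI K ∧ N ⊔ AnnM K = ⊤}

/-- `M` is quasi-projective. -/
def QuasiProjective (R M : Type*) [Ring R] [AddCommGroup M] [Module R M] : Prop :=
  ∀ (K : Submodule R M) (h : M →ₗ[R] M ⧸ K), ∃ g : M →ₗ[R] M, K.mkQ ∘ₗ g = h

/-- The lattice `Λ^{fi}(M)` of fully invariant submodules is compact. -/
def FICompact (R M : Type*) [Ring R] [AddCommGroup M] [Module R M] : Prop :=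
  ∀ S : Set (Submodule R M), (∀ N ∈ S, IsFI N) → sSup S = ⊤ →
    ∃ F : Finset (Submodule R M), ↑F ⊆ S ∧ sSup (F : Set (Submodule R M)) = ⊤

/-- The lattice `Λ^{fi}(M)` is normal. -/
def FINormal (R M : Type*) [Ring R] [AddCommGroup M] [Module R M] : Prop :=
  ∀ N L : Submodule R M, IsFI N → IsFI L → N ⊔ L = ⊤ →
    ∃ N' L' : Submodule R M, IsFI N' ∧ IsFI L' ∧
      N ⊔ L' = ⊤ ∧ N' ⊔ L = ⊤ ∧ SmProd N' L' = ⊥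

/-- Gelfand module. -/
def Gelfand (R M : Type*) [Ring R] [AddCommGroup M] [Module R M] : Prop :=
  ∀ N L : Submodule R M, IsCoatom N → IsCoatom L → N ≠ L →
    ∃ N' L' : Submodule R M, IsFI N' ∧ IsFI L' ∧ ¬ N' ≤ N ∧ ¬ L' ≤ L ∧ SmProd L' N' = ⊥

/-- The hull-kernel topology on `mx^{fi}(M)`, generated by the sets
`m(K) = {𝓜 : K ⊄ 𝓜}` for `K` fully invariant. -/
def mxfiTop (R M : Type*) [Ring R] [AddCommGroup M] [Module R M] :
    TopologicalSpace {N : Submodule R M // IsMaxFI N} :=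
  TopologicalSpace.generateFrom
    {U | ∃ K : Submodule R M, IsFI K ∧ U = {𝓜 : {N : Submodule R M // IsMaxFI N} | ¬ K ≤ 𝓜.1}}

/-- The frame `Ψ(M)`. -/
def PsiSet (R M : Type*) [Ring R] [AddCommGroup M] [Module R M] : Set (Submodule R M) :=
  {N | IsFI N ∧ ∀ n ∈ N, N ⊔ AnnM (Submodule.span R {n}) = ⊤}

/-- The points (`∧`-irreducible elements) of `Ψ(M)`. -/
def PsiPt (R M : Type*) [Ring R] [AddCommGroup M] [Module R M] : Set (Submodule R M) :=
  {p | p ∈ PsiSet R M ∧ p ≠ ⊤ ∧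
    ∀ N ∈ PsiSet R M, ∀ L ∈ PsiSet R M, N ⊓ L ≤ p → N ≤ p ∨ L ≤ p}

/-- The topology on the point space of `Ψ(M)`, with opens generated by
`U(N) = {p : N ⊄ p}` for `N ∈ Ψ(M)`. -/
def psiPtTop (R M : Type*) [Ring R] [AddCommGroup M] [Module R M] :
    TopologicalSpace (PsiPt R M) :=
  TopologicalSpace.generateFrom
    {U | ∃ N ∈ PsiSet R M, U = {p : PsiPt R M | ¬ N ≤ p.1}}

lemma smProd_eq_bot_iff {L K : Submodule R M} :
    SmProd L K = ⊥ ↔ ∀ f : M →ₗ[R] K, ∀ x ∈ L, f x = 0 := by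
  simp only [SmProd, iSup_eq_bot, Submodule.eq_bot_iff, Submodule.mem_map]
  refine forall_congr' fun f => ⟨fun h x hx => ?_, ?_⟩
  · exact Subtype.ext (h _ ⟨x, hx, rfl⟩)
  · rintro h _ ⟨x, hx, rfl⟩
    simp [h x hx]

lemma annM_eq (K : Submodule R M) : AnnM K = ⨅ f : M →ₗ[R] K, LinearMap.ker f := by
  apply le_antisymm
  · refine sSup_le fun L hL => le_iInf fun f x hx => ?_
    exact smProd_eq_bot_iff.1 hL f x hx
  · refine le_sSup ?_
    refine smProd_eq_bot_iff.2 fun f x hx => ?_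
    exact (Submodule.mem_iInf _).1 hx f

lemma mem_annM {K : Submodule R M} {x : M} : x ∈ AnnM K ↔ ∀ f : M →ₗ[R] K, f x = 0 := by
  simp [annM_eq, Submodule.mem_iInf]

lemma annM_anti {K L : Submodule R M} (h : K ≤ L) : AnnM L ≤ AnnM K := by
  intro x hx
  refine mem_annM.2 fun f => ?_
  have := mem_annM.1 hx (Submodule.inclusion h ∘ₗ f)
  exact Submodule.inclusion_injective h (by simpa using this)

lemma annM_isFI (K : Submodule R M) : IsFI (AnnM K) := by
  rintro g _ ⟨x, hx, rfl⟩
  exact mem_annM.2 fun f => mem_annM.1 hx (f ∘ₗ g)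

lemma isFI_sSup {S : Set (Submodule R M)} (h : ∀ N ∈ S, IsFI N) : IsFI (sSup S) := by
  intro f
  rw [Submodule.map_le_iff_le_comap]
  exact sSup_le fun N hN => Submodule.map_le_iff_le_comap.1 ((h N hN f).trans (le_sSup hN))

lemma isFI_sup {N L : Submodule R M} (hN : IsFI N) (hL : IsFI L) : IsFI (N ⊔ L) := by
  rw [← sSup_pair]
  exact isFI_sSup (by rintro _ (rfl | rfl) <;> assumption)

lemma isFI_inf {N L : Submodule R M} (hN : IsFI N) (hL : IsFI L) : IsFI (N ⊓ L) :=
  fun f => le_inf ((Submodule.map_mono inf_le_left).trans (hN f))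
    ((Submodule.map_mono inf_le_right).trans (hL f))

lemma isFI_top : IsFI (⊤ : Submodule R M) := fun _ => le_top

lemma smProd_sup_left (N L K : Submodule R M) :
    SmProd (N ⊔ L) K = SmProd N K ⊔ SmProd L K := by
  simp only [SmProd, Submodule.map_sup, iSup_sup_eq]

lemma smProd_le_right (N K : Submodule R M) : SmProd N K ≤ K := by
  refine iSup_le fun f => ?_
  rintro _ ⟨x, -, rfl⟩
  exact (f x).2

lemma smProd_le_left {N : Submodule R M} (hN : IsFI N) (K : Submodule R M) :
    SmProd N K ≤ N :=
  iSup_le fun _ => hN _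

lemma smProd_annM (K : Submodule R M) : SmProd (AnnM K) K = ⊥ :=
  smProd_eq_bot_iff.2 fun f _ hx => mem_annM.1 hx f

/-- Comaximality with a fixed fully invariant submodule is stable under intersection: this is
where `B = M · B` replaces distributivity of the lattice. -/
lemma sup_inf_eq_top (hgen : ∀ L : Submodule R M, SmProd ⊤ L = L) {K A B : Submodule R M}
    (hK : IsFI K) (hA : IsFI A) (h1 : K ⊔ A = ⊤) (h2 : K ⊔ B = ⊤) : K ⊔ (A ⊓ B) = ⊤ := by
  have hB : B ≤ K ⊔ (A ⊓ B) := by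
    conv_lhs => rw [← hgen B, ← h1, smProd_sup_left]
    exact sup_le_sup (smProd_le_left hK B) (le_inf (smProd_le_left hA B) (smProd_le_right A B))
  rw [eq_top_iff, ← h2]
  exact sup_le le_sup_left hB

lemma IsMaxFI.sup_eq_top {N A : Submodule R M} (hN : IsMaxFI N) (hA : IsFI A) (h : ¬ A ≤ N) :
    N ⊔ A = ⊤ :=
  hN.2.2 _ (isFI_sup hN.1 hA) (left_lt_sup.2 h)

lemma IsMaxFI.not_inf_le (hgen : ∀ L : Submodule R M, SmProd ⊤ L = L) {N A B : Submodule R M}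
    (hN : IsMaxFI N) (hA : IsFI A) (hB : IsFI B) (h1 : ¬ A ≤ N) (h2 : ¬ B ≤ N) :
    ¬ A ⊓ B ≤ N := by
  intro h
  have := sup_inf_eq_top hgen hN.1 hA (hN.sup_eq_top hA h1) (hN.sup_eq_top hB h2)
  exact hN.2.1 (by rwa [sup_eq_left.2 h] at this)

lemma exists_isMaxFI_ge (hcomp : FICompact R M) {N : Submodule R M} (hN : IsFI N) (h : N ≠ ⊤) :
    ∃ L, IsMaxFI L ∧ N ≤ L := by
  obtain ⟨L, hNL, hL⟩ := zorn_le_nonempty₀ {L : Submodule R M | IsFI L ∧ L ≠ ⊤} (by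
    intro c hc hchain y hy
    refine ⟨sSup c, ⟨isFI_sSup fun L hL => (hc hL).1, fun htop => ?_⟩, fun z hz => le_sSup hz⟩
    obtain ⟨F, hFc, hF⟩ := hcomp c (fun L hL => (hc hL).1) htop
    have hne : F.Nonempty := by
      rw [Finset.nonempty_iff_ne_empty]
      rintro rfl
      -- an empty subcover makes `M` zero, so the proper member `y` of the chain would be `⊤`
      exact (hc hy).2 (eq_top_iff.2 (by rw [← hF]; simp))
    have hmem : ∀ (G : Finset (Submodule R M)), G.Nonempty → (G : Set (Submodule R M)) ⊆ c →
        sSup (G : Set (Submodule R M)) ∈ c := by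
      intro G hG
      induction hG using Finset.Nonempty.cons_induction with
      | singleton a => simp
      | cons a s ha hs ih =>
        intro hsub
        rw [Finset.coe_cons] at hsub ⊢
        rw [sSup_insert]
        have h1 := hsub (Set.mem_insert _ _)
        have h2 := ih ((Set.subset_insert _ _).trans hsub)
        rcases hchain.total h1 h2 with h | h
        · rwa [sup_eq_right.2 h]
        · rwa [sup_eq_left.2 h]
    exact (hc (hmem F hne hFc)).2 hF) N ⟨hN, h⟩
  refine ⟨L, ⟨hL.prop.1, hL.prop.2, fun K hK hLK => ?_⟩, hNL⟩
  by_contra hK'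
  exact hLK.not_ge (hL.le_of_ge ⟨hK, hK'⟩ hLK.le)

lemma eq_top_of_forall_isMaxFI (hcomp : FICompact R M) {N : Submodule R M} (hN : IsFI N)
    (h : ∀ L, IsMaxFI L → ¬ N ≤ L) : N = ⊤ := by
  by_contra hne
  obtain ⟨L, hL, hNL⟩ := exists_isMaxFI_ge hcomp hN hne
  exact h L hL hNL

lemma mem_of_sup_annM (hgen : ∀ L : Submodule R M, SmProd ⊤ L = L) {L : Submodule R M}
    (hL : IsFI L) {n : M} (h : L ⊔ AnnM (span R {n}) = ⊤) : n ∈ L := by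
  have h1 : span R {n} ≤ L := by
    rw [← hgen (span R {n}), ← h, smProd_sup_left, smProd_annM, sup_bot_eq]
    exact smProd_le_left hL _
  exact h1 (mem_span_singleton_self n)

/-- By projectivity, a map into `K + L` is the sum of a map into `K` and a map into `L`. -/
lemma inf_annM_le (hproj : Module.Projective R M) (K L : Submodule R M) :
    AnnM K ⊓ AnnM L ≤ AnnM (K ⊔ L) := by
  rintro x ⟨hK, hL⟩
  refine mem_annM.2 fun f => ?_
  let p : (K × L) →ₗ[R] (K ⊔ L : Submodule R M) :=
    (Submodule.inclusion le_sup_left).coprod (Submodule.inclusion le_sup_right)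
  have hp : Function.Surjective p := by
    rintro ⟨y, hy⟩
    obtain ⟨a, ha, b, hb, rfl⟩ := Submodule.mem_sup.1 hy
    exact ⟨(⟨a, ha⟩, ⟨b, hb⟩), Subtype.ext (by simp [p])⟩
  obtain ⟨h, rfl⟩ := Module.projective_lifting_property p f hp
  have h1 := mem_annM.1 hK (LinearMap.fst R K L ∘ₗ h)
  have h2 := mem_annM.1 hL (LinearMap.snd R K L ∘ₗ h)
  have h3 : h x = 0 := Prod.ext h1 h2
  simp [h3]

/-- By projectivity, a map into `g(K)` lifts along `g` to a map into `K`. -/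
lemma annM_le_annM_map (hproj : Module.Projective R M) (K : Submodule R M) (g : M →ₗ[R] M) :
    AnnM K ≤ AnnM (K.map g) := by
  intro x hx
  refine mem_annM.2 fun f => ?_
  obtain ⟨h, rfl⟩ := Module.projective_lifting_property (g.submoduleMap K) f
    (g.submoduleMap_surjective K)
  simp [mem_annM.1 hx h]

/-- The submodule `{n : K + Ann_M(Rn) = M}`, for `K` fully invariant; it is the element of `Ψ(M)`
corresponding to the open set `m(K)`. -/
def psiCore (hproj : Module.Projective R M) (hgen : ∀ L : Submodule R M, SmProd ⊤ L = L)
    (K : Submodule R M) (hK : IsFI K) : Submodule R M where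
  carrier := {n | K ⊔ AnnM (span R {n}) = ⊤}
  zero_mem' := by
    have : AnnM (span R {(0 : M)}) = ⊤ := by
      refine eq_top_iff.2 fun x _ => mem_annM.2 fun f => Subtype.ext ?_
      simpa using (f x).2
    change K ⊔ AnnM (span R {(0 : M)}) = ⊤
    rw [this, sup_top_eq]
  add_mem' := by
    intro a b ha hb
    have h := sup_inf_eq_top hgen hK (annM_isFI _) ha hb
    refine top_unique (h.ge.trans (sup_le_sup_left ((inf_annM_le hproj _ _).trans
      (annM_anti ?_)) K))
    rw [span_singleton_le_iff_mem]
    exact add_mem (mem_sup_left (mem_span_singleton_self a))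
      (mem_sup_right (mem_span_singleton_self b))
  smul_mem' := by
    intro r a ha
    refine top_unique (ha.ge.trans (sup_le_sup_left (annM_anti ?_) K))
    exact span_singleton_smul_le R r a

section Core

variable (hproj : Module.Projective R M) (hgen : ∀ L : Submodule R M, SmProd ⊤ L = L)
  {K : Submodule R M} (hK : IsFI K)

lemma mem_psiCore {n : M} :
    n ∈ psiCore hproj hgen K hK ↔ K ⊔ AnnM (span R {n}) = ⊤ := Iff.rfl

lemma psiCore_isFI : IsFI (psiCore hproj hgen K hK) := by
  rintro g _ ⟨n, hn, rfl⟩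
  refine top_unique (((mem_psiCore hproj hgen hK).1 hn).ge.trans (sup_le_sup_left ?_ K))
  refine (annM_le_annM_map hproj _ g).trans (annM_anti ?_)
  rw [map_span, Set.image_singleton]

lemma psiCore_le : psiCore hproj hgen K hK ≤ K :=
  fun _ hn => mem_of_sup_annM hgen hK hn

/-- Strong harmonicity and compactness make `psiCore K` large enough not to lie in any maximal
fully invariant submodule that does not contain `K`. -/
lemma not_psiCore_le (hsh : StronglyHarmonic R M) (hcomp : FICompact R M) {N : Submodule R M}
    (hN : IsMaxFI N) (hKN : ¬ K ≤ N) : ¬ psiCore hproj hgen K hK ≤ N := by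
  let S : Set (Submodule R M) :=
    {B | IsFI B ∧ ∃ A, IsFI A ∧ ¬ A ≤ N ∧ SmProd B A = ⊥}
  have hS : ∀ B ∈ insert K S, IsFI B := by
    rintro B (rfl | hB)
    exacts [hK, hB.1]
  have htop : sSup (insert K S) = ⊤ := by
    refine eq_top_of_forall_isMaxFI hcomp (isFI_sSup hS) fun L hL hle => ?_
    have hKL : K ≤ L := (le_sSup (Set.mem_insert _ _)).trans hle
    have hne : N ≠ L := fun h => hKN (h ▸ hKL)
    obtain ⟨A, B, hA, hB, hAN, hBL, h0⟩ := hsh N L hN hL hne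
    have hBS : B ∈ S := ⟨hB, A, hA, hAN, h0⟩
    exact hBL ((le_sSup (Set.mem_insert_of_mem _ hBS)).trans hle)
  obtain ⟨F, hFS, hF⟩ := hcomp _ hS htop
  have key : ∀ G : Finset (Submodule R M), (G : Set (Submodule R M)) ⊆ insert K S →
      ∃ A, IsFI A ∧ ¬ A ≤ N ∧ sSup (G : Set (Submodule R M)) ≤ K ⊔ AnnM A := by
    intro G
    induction G using Finset.cons_induction with
    | empty =>
      exact fun _ => ⟨⊤, isFI_top, fun h => hN.2.1 (top_unique h), by simp⟩
    | cons B G hBG ih =>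
      intro hsub
      rw [Finset.coe_cons] at hsub
      obtain ⟨A, hA, hAN, hle⟩ := ih ((Set.subset_insert _ _).trans hsub)
      rw [Finset.coe_cons, sSup_insert]
      rcases hsub (Set.mem_insert _ _) with rfl | ⟨-, A', hA', hAN', h0⟩
      · exact ⟨A, hA, hAN, sup_le le_sup_left hle⟩
      · refine ⟨A ⊓ A', isFI_inf hA hA', hN.not_inf_le hgen hA hA' hAN hAN', sup_le ?_ ?_⟩
        · have hBA : B ≤ AnnM A' := le_sSup h0
          exact hBA.trans ((annM_anti inf_le_right).trans le_sup_right)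
        · exact hle.trans (sup_le_sup_left (annM_anti inf_le_left) K)
  obtain ⟨A, hA, hAN, hle⟩ := key F hFS
  rw [hF] at hle
  intro hcore
  refine hAN (le_trans (fun n hn => ?_) hcore)
  refine top_unique (hle.trans (sup_le_sup_left (annM_anti ?_) K))
  rwa [span_singleton_le_iff_mem]

lemma psiCore_le_iff (hsh : StronglyHarmonic R M) (hcomp : FICompact R M) {N : Submodule R M}
    (hN : IsMaxFI N) : psiCore hproj hgen K hK ≤ N ↔ K ≤ N :=
  ⟨fun h => by_contra fun h' => not_psiCore_le hproj hgen hK hsh hcomp hN h' h,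
    (psiCore_le hproj hgen hK).trans⟩

lemma psiCore_mem_psiSet (hsh : StronglyHarmonic R M) (hcomp : FICompact R M) :
    psiCore hproj hgen K hK ∈ PsiSet R M := by
  refine ⟨psiCore_isFI hproj hgen hK, fun n hn => ?_⟩
  refine eq_top_of_forall_isMaxFI hcomp
    (isFI_sup (psiCore_isFI hproj hgen hK) (annM_isFI _)) fun L hL hle => hL.2.1 ?_
  have h1 := (psiCore_le_iff hproj hgen hK hsh hcomp hL).1 (le_sup_left.trans hle)
  refine top_unique (((mem_psiCore hproj hgen hK).1 hn).ge.trans ?_)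
  exact sup_le h1 (le_sup_right.trans hle)

end Core

lemma psiSet_le_of_forall (hgen : ∀ L : Submodule R M, SmProd ⊤ L = L) (hcomp : FICompact R M)
    {N L : Submodule R M} (hN : N ∈ PsiSet R M) (hL : L ∈ PsiSet R M)
    (h : ∀ P, IsMaxFI P → L ≤ P → N ≤ P) : N ≤ L := by
  intro n hn
  refine mem_of_sup_annM hgen hL.1 ?_
  refine eq_top_of_forall_isMaxFI hcomp (isFI_sup hL.1 (annM_isFI _)) fun P hP hle => hP.2.1 ?_
  refine top_unique ((hN.2 n hn).ge.trans ?_)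
  exact sup_le (h P hP (le_sup_left.trans hle)) (le_sup_right.trans hle)

/-- The generating sets `m(K)` of the hull-kernel topology already form the whole topology. -/
lemma exists_eq_of_isOpen (hgen : ∀ L : Submodule R M, SmProd ⊤ L = L)
    {U : Set {N : Submodule R M // IsMaxFI N}} (hU : @IsOpen _ (mxfiTop R M) U) :
    ∃ K : Submodule R M, IsFI K ∧ U = {P : {N : Submodule R M // IsMaxFI N} | ¬ K ≤ P.1} := by
  change TopologicalSpace.GenerateOpen _ U at hU
  induction hU with
  | basic s hs => exact hs
  | univ =>
    refine ⟨⊤, isFI_top, Eq.symm (Set.eq_univ_of_forall fun P h => P.2.2.1 (top_unique h))⟩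
  | inter s t _ _ hs ht =>
    obtain ⟨K, hK, rfl⟩ := hs
    obtain ⟨L, hL, rfl⟩ := ht
    refine ⟨K ⊓ L, isFI_inf hK hL, Set.ext fun P => ⟨?_, ?_⟩⟩
    · rintro ⟨h1, h2⟩
      exact P.2.not_inf_le hgen hK hL h1 h2
    · exact fun h => ⟨fun h1 => h (inf_le_left.trans h1), fun h2 => h (inf_le_right.trans h2)⟩
  | sUnion S _ ih =>
    choose! k hk using ih
    refine ⟨sSup (k '' S), isFI_sSup (by rintro _ ⟨s, hs, rfl⟩; exact (hk s hs).1),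
      Set.ext fun P => ?_⟩
    simp only [Set.mem_sUnion, Set.mem_ofPred_eq, sSup_le_iff, Set.forall_mem_image, not_forall]
    constructor
    · rintro ⟨s, hs, hP⟩
      rw [(hk s hs).2] at hP
      exact ⟨s, hs, hP⟩
    · rintro ⟨s, hs, hP⟩
      refine ⟨s, hs, ?_⟩
      rw [(hk s hs).2]
      exact hP

/-- For `M` projective, every submodule `M`-generated, `M` strongly harmonic
and `Λ^{fi}(M)` compact, the map `N ↦ m(N)` is an order isomorphism from `(Ψ(M), ⊆)` onto the
frame of open sets of `mx^{fi}(M)`; in particular `Ψ(M) ≅ 𝒪(mx^{fi}(M))` as frames. -/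
theorem psi_orderIso_opens_mxfi (hproj : Module.Projective R M)
    (hgen : ∀ L : Submodule R M, SmProd ⊤ L = L)
    (hsh : StronglyHarmonic R M) (hcomp : FICompact R M) :
    letI : TopologicalSpace {N : Submodule R M // IsMaxFI N} := mxfiTop R M
    ∃ e : PsiSet R M ≃o TopologicalSpace.Opens {N : Submodule R M // IsMaxFI N},
      ∀ N : PsiSet R M,
        (e N : Set {N : Submodule R M // IsMaxFI N}) =
          {𝓜 : {N : Submodule R M // IsMaxFI N} | ¬ (N : Submodule R M) ≤ 𝓜.1} := by
  let _ : TopologicalSpace {N : Submodule R M // IsMaxFI N} := mxfiTop R M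
  let m : PsiSet R M → TopologicalSpace.Opens {N : Submodule R M // IsMaxFI N} := fun N =>
    ⟨{P | ¬ (N : Submodule R M) ≤ P.1},
      TopologicalSpace.GenerateOpen.basic _ ⟨N, N.2.1, rfl⟩⟩
  have hm : ∀ N L : PsiSet R M, m N ≤ m L ↔ N ≤ L := by
    refine fun N L => ⟨fun h => ?_, fun h P hP hLP => hP (le_trans h hLP)⟩
    refine psiSet_le_of_forall hgen hcomp N.2 L.2 fun P hP hLP => ?_
    by_contra hNP
    exact h (show (⟨P, hP⟩ : {N : Submodule R M // IsMaxFI N}) ∈ m N from hNP) hLP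
  have hsurj : Function.Surjective m := by
    rintro ⟨U, hU⟩
    obtain ⟨K, hK, rfl⟩ := exists_eq_of_isOpen hgen hU
    refine ⟨⟨psiCore hproj hgen K hK, psiCore_mem_psiSet hproj hgen hK hsh hcomp⟩, ?_⟩
    refine TopologicalSpace.Opens.ext (Set.ext fun P => ?_)
    exact not_congr (psiCore_le_iff hproj hgen hK hsh hcomp P.2)
  exact ⟨RelIso.ofSurjective (OrderEmbedding.ofMapLEIff m hm) hsurj, fun N => rfl⟩
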